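/- Let f be a canonical admissible 6-tuple. Then: (i) f is minimal if and only if δ(ψ₁^i(f))≥0 for i=0,1,2; (ii) f is a root if and only if, for each i∈{0,1,2}, δ(ψ₁^i(f))>0 whenever σ(ψ₁^i(f)) is not H-equivalent to f. -/

import Mathlib

/-!
Common setup: 6-tuples, the coloured graph Γ(f), conditions (I)–(VI),
the maps ψ₁, ψ₂, ψ₃, σ, equivalences, traps, canonical/minimal/root tuples.
-/

namespace GMN

/-- A 6-tuple `(h₀,h₁,h₂;q₀,q₁,q₂)` of integers. -/
structure Tuple where
  h0 : ℤ
  h1 : ℤ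
  h2 : ℤ
  q0 : ℤ
  q1 : ℤ
  q2 : ℤ

namespace Tuple

/-- The `h`-components indexed by `ℤ₃`. -/
def h (f : Tuple) : ZMod 3 → ℤ := fun i => if i = 0 then f.h0 else if i = 1 then f.h1 else f.h2

/-- The `q`-components indexed by `ℤ₃`. -/
def q (f : Tuple) : ZMod 3 → ℤ := fun i => if i = 0 then f.q0 else if i = 1 then f.q1 else f.q2

/-- `2lᵢ = h_{i-1} + hᵢ`. -/
def twol (f : Tuple) (i : ZMod 3) : ℤ := f.h (i - 1) + f.h i

end Tuple

/-- Condition (I): all `hᵢ` positive. -/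
def CondI (f : Tuple) : Prop := ∀ i, 0 < f.h i

/-- Condition (II): all `hᵢ` of the same parity. -/
def CondII (f : Tuple) : Prop := ∀ i j, f.h i % 2 = f.h j % 2

/-- Condition (III): `0 ≤ qᵢ < 2lᵢ`. -/
def CondIII (f : Tuple) : Prop := ∀ i, 0 ≤ f.q i ∧ f.q i < f.twol i

/-- Condition (IV): all `qᵢ` of the same parity. -/
def CondIV (f : Tuple) : Prop := ∀ i j, f.q i % 2 = f.q j % 2

/-- Conditions (I)–(IV) together. -/
def CondsI_IV (f : Tuple) : Prop := CondI f ∧ CondII f ∧ CondIII f ∧ CondIV f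

/-- Condition (V): `hᵢ + qᵢ` odd. -/
def CondV (f : Tuple) : Prop := ∀ i, (f.h i + f.q i) % 2 = 1

/-- The vertex set `V(f) = ⋃ᵢ {i} × ℤ_{2lᵢ}`, with second coordinates as least
nonnegative residues. -/
def Vtx (f : Tuple) : Set (ZMod 3 × ℤ) := {p | 0 ≤ p.2 ∧ p.2 < f.twol p.1}

/-- `ι₀(i,j) = (i, j + (−1)^j)`, second coordinate mod `2lᵢ`. -/
def iota0 (f : Tuple) (p : ZMod 3 × ℤ) : ZMod 3 × ℤ :=
  (p.1, (if p.2 % 2 = 0 then p.2 + 1 else p.2 - 1) % f.twol p.1)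

/-- `ι₁(i,j) = (i, j − (−1)^j)`, second coordinate mod `2lᵢ`. -/
def iota1 (f : Tuple) (p : ZMod 3 × ℤ) : ZMod 3 × ℤ :=
  (p.1, (if p.2 % 2 = 0 then p.2 - 1 else p.2 + 1) % f.twol p.1)

/-- `ι₂(i,j) = (i+1, −j−1)` if `0 ≤ j ≤ hᵢ−1`, and `(i−1, 2lᵢ−j−1)` if `hᵢ ≤ j ≤ 2lᵢ−1`. -/
def iota2 (f : Tuple) (p : ZMod 3 × ℤ) : ZMod 3 × ℤ :=
  if p.2 < f.h p.1 then (p.1 + 1, (-p.2 - 1) % f.twol (p.1 + 1))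
  else (p.1 - 1, (f.twol p.1 - p.2 - 1) % f.twol (p.1 - 1))

/-- `ρ(i,j) = (i, j + qᵢ)`. -/
def rho (f : Tuple) (p : ZMod 3 × ℤ) : ZMod 3 × ℤ :=
  (p.1, (p.2 + f.q p.1) % f.twol p.1)

/-- `ρ⁻¹(i,j) = (i, j − qᵢ)`. -/
def rhoInv (f : Tuple) (p : ZMod 3 × ℤ) : ZMod 3 × ℤ :=
  (p.1, (p.2 - f.q p.1) % f.twol p.1)

/-- `ι₃ = ρ ∘ ι₂ ∘ ρ⁻¹`. -/
def iota3 (f : Tuple) : ZMod 3 × ℤ → ZMod 3 × ℤ :=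
  rho f ∘ iota2 f ∘ rhoInv f

/-- The four involutions of `Γ(f)`, indexed by the colour `c ∈ {0,1,2,3}`. -/
def iota (f : Tuple) : Fin 4 → ZMod 3 × ℤ → ZMod 3 × ℤ
  | 0 => iota0 f
  | 1 => iota1 f
  | 2 => iota2 f
  | 3 => iota3 f

/-- One step along an edge of `Γ(f)` whose colour lies in `S`, within `V(f)`. -/
def Step (f : Tuple) (S : Set (Fin 4)) (a b : ZMod 3 × ℤ) : Prop :=
  a ∈ Vtx f ∧ b ∈ Vtx f ∧ ∃ c ∈ S, b = iota f c a

/-- The orbit relation on `V(f)` of the subgroup generated by the involutions with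
colours in `S` (the `S`-residue relation). -/
def OrbRel (f : Tuple) (S : Set (Fin 4)) : ZMod 3 × ℤ → ZMod 3 × ℤ → Prop :=
  Relation.EqvGen (Step f S)

/-- The subgroup generated by the colours in `S` has exactly three orbits on `V(f)`. -/
def ThreeOrbits (f : Tuple) (S : Set (Fin 4)) : Prop :=
  ∃ a b c, a ∈ Vtx f ∧ b ∈ Vtx f ∧ c ∈ Vtx f ∧
    ¬ OrbRel f S a b ∧ ¬ OrbRel f S a c ∧ ¬ OrbRel f S b c ∧
    ∀ v ∈ Vtx f, OrbRel f S a v ∨ OrbRel f S b v ∨ OrbRel f S c v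

/-- Admissibility: conditions (I)–(IV), (V), and (VI) (three `{2,3}`-residues). -/
def Admissible (f : Tuple) : Prop :=
  CondsI_IV f ∧ CondV f ∧ ThreeOrbits f {2, 3}

/-- `ψ₁(h₀,h₁,h₂;q₀,q₁,q₂) = (h₁,h₂,h₀;q₁,q₂,q₀)`. -/
def psi1 (f : Tuple) : Tuple := ⟨f.h1, f.h2, f.h0, f.q1, f.q2, f.q0⟩

/-- `ψ₂(h₀,h₁,h₂;q₀,q₁,q₂) = (h₂,h₁,h₀;q₀,q₂,q₁)`. -/
def psi2 (f : Tuple) : Tuple := ⟨f.h2, f.h1, f.h0, f.q0, f.q2, f.q1⟩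

/-- `ψ₃(h₀,h₁,h₂;q₀,q₁,q₂) = (h₀,h₁,h₂;−q₀,−q₁,−q₂)`, the `q`-entries reduced to their
least nonnegative residues mod the respective `2lᵢ`. -/
def psi3 (f : Tuple) : Tuple :=
  ⟨f.h0, f.h1, f.h2,
    (-f.q0) % (f.h2 + f.h0), (-f.q1) % (f.h0 + f.h1), (-f.q2) % (f.h1 + f.h2)⟩

/-- The 2-symmetric transformation `σ`, with the `q′`-entries reduced to their least
nonnegative residues mod the respective `2lᵢ′ = h′_{i−1} + h′ᵢ`. -/
def sigma (f : Tuple) : Tuple :=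
  if f.q0 = 0 then f
  else if f.q0 < f.h0 ∧ f.q0 < f.h2 then
    ⟨f.h0 + f.h1 - f.q0, f.q0, f.h2 + f.h1 - f.q0,
      (f.h0 + f.h1 + f.h2 - 2 * f.q0) % ((f.h2 + f.h1 - f.q0) + (f.h0 + f.h1 - f.q0)),
      (f.q0 + f.q1 + f.h1) % ((f.h0 + f.h1 - f.q0) + f.q0),
      (f.q0 + f.q2 + f.h1) % (f.q0 + (f.h2 + f.h1 - f.q0))⟩
  else if f.h0 < f.q0 ∧ f.h2 < f.q0 then
    ⟨f.q0 + f.h1 - f.h2, f.h0 + f.h2 - f.q0, f.q0 + f.h1 - f.h0,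
      f.h1 % ((f.q0 + f.h1 - f.h0) + (f.q0 + f.h1 - f.h2)),
      (f.q0 + f.q1 - f.h2) % ((f.q0 + f.h1 - f.h2) + (f.h0 + f.h2 - f.q0)),
      (f.q0 + f.q2 - f.h0) % ((f.h0 + f.h2 - f.q0) + (f.q0 + f.h1 - f.h0))⟩
  else if f.q0 < f.h2 then
    ⟨f.h1, f.h0, f.h1 + f.h2 - f.h0,
      (f.h1 + f.h2 - f.q0) % ((f.h1 + f.h2 - f.h0) + f.h1),
      f.q1 % (f.h1 + f.h0),
      (2 * f.q0 + f.q2 + f.h1 - f.h0) % (f.h0 + (f.h1 + f.h2 - f.h0))⟩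
  else
    ⟨f.h1 + f.h0 - f.h2, f.h2, f.h1,
      (f.h1 + f.h0 - f.q0) % (f.h1 + (f.h1 + f.h0 - f.h2)),
      (2 * f.q0 + f.q1 + f.h1 - f.h2) % ((f.h1 + f.h0 - f.h2) + f.h2),
      f.q2 % (f.h2 + f.h1)⟩

/-- The complexity `ν(f) = h₀ + h₁ + h₂`. -/
def nu (f : Tuple) : ℤ := f.h0 + f.h1 + f.h2

/-- `δ(f) = ν(σ(f)) − ν(f)`. -/
def delta (f : Tuple) : ℤ := nu (sigma f) - nu f

/-- One step of the action of a generator of `H` on admissible 6-tuples. -/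
def HStep (a b : Tuple) : Prop :=
  Admissible a ∧ Admissible b ∧ (b = psi1 a ∨ b = psi2 a ∨ b = psi3 a)

/-- `H`-equivalence: the orbit relation of `H = ⟨ψ₁,ψ₂,ψ₃⟩` on `ℱ`. -/
def HEquiv : Tuple → Tuple → Prop := Relation.EqvGen HStep

/-- One step of the action of a generator of `H′` on admissible 6-tuples. -/
def H'Step (a b : Tuple) : Prop :=
  Admissible a ∧ Admissible b ∧ (b = psi2 a ∨ b = psi3 a)

/-- `H′`-equivalence: the orbit relation of `H′ = ⟨ψ₂,ψ₃⟩` on `ℱ`. -/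
def H'Equiv : Tuple → Tuple → Prop := Relation.EqvGen H'Step

/-- One step of the action of a generator of `G` on admissible 6-tuples. -/
def GStep (a b : Tuple) : Prop :=
  Admissible a ∧ Admissible b ∧ (b = psi1 a ∨ b = psi2 a ∨ b = psi3 a ∨ b = sigma a)

/-- `G`-equivalence: the orbit relation of `G = ⟨ψ₁,ψ₂,ψ₃,σ⟩` on `ℱ`. -/
def GEquiv : Tuple → Tuple → Prop := Relation.EqvGen GStep

/-- Membership in the set `{0, r+1, r+2, …, s−1}`. -/
def inT (r s x : ℤ) : Prop := x = 0 ∨ (r < x ∧ x < s)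

/-- A trap of type `(r,s)`: `H`-equivalent to an admissible `(r,r,s;q₀,0,q₂)` with
`q₀+k(q₀+q₂), q₂+k(q₀+q₂) ∈ {0,r+1,…,s−1} (mod r+s)` for all `k ≥ 0`. -/
def IsTrapOfType (r s : ℤ) (f : Tuple) : Prop :=
  ∃ g : Tuple, Admissible g ∧ HEquiv f g ∧
    g.h0 = r ∧ g.h1 = r ∧ g.h2 = s ∧ g.q1 = 0 ∧
    ∀ k : ℕ, inT r s ((g.q0 + (k : ℤ) * (g.q0 + g.q2)) % (r + s)) ∧
             inT r s ((g.q2 + (k : ℤ) * (g.q0 + g.q2)) % (r + s))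

/-- A trap: a trap of some type `(r,s)` with `0 < r ≤ s`. -/
def IsTrap (f : Tuple) : Prop := ∃ r s : ℤ, 0 < r ∧ r ≤ s ∧ IsTrapOfType r s f

/-- The canonical representative conditions (a)–(i) (together with admissibility). -/
def Canonical (f : Tuple) : Prop :=
  Admissible f ∧
  (f.h0 ≤ f.h1 ∧ f.h1 ≤ f.h2) ∧
  (2 * f.q0 ≤ f.h2 + f.h0) ∧
  ((f.q0 = 0 ∨ 2 * f.q0 = f.h2 + f.h0) → 2 * f.q1 ≤ f.h0 + f.h1) ∧
  ((f.q0 = 0 ∨ 2 * f.q0 = f.h2 + f.h0) → (f.q1 = 0 ∨ 2 * f.q1 = f.h0 + f.h1) →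
    2 * f.q2 ≤ f.h1 + f.h2) ∧
  (f.h0 = f.h1 → f.q0 ≤ f.q2 ∧ f.q2 ≤ (-f.q0) % (f.h2 + f.h0)) ∧
  (f.h0 = f.h1 → (f.q2 = f.q0 ∨ f.q2 = (-f.q0) % (f.h2 + f.h0)) → f.q1 ≤ f.h1) ∧
  (f.h1 = f.h2 → f.q0 ≤ f.q1 ∧ f.q1 ≤ (-f.q0) % (f.h2 + f.h0)) ∧
  (f.h1 = f.h2 → (f.q1 = f.q0 ∨ f.q1 = (-f.q0) % (f.h2 + f.h0)) → f.q2 ≤ f.h2) ∧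
  (f.h0 = f.h1 ∧ f.h1 = f.h2 → f.q1 ≤ f.q2)

/-- A canonical 6-tuple is minimal if its complexity is minimal in its `G`-orbit. -/
def Minimal (f : Tuple) : Prop :=
  Canonical f ∧ ∀ g, GEquiv f g → nu f ≤ nu g

/-- A canonical 6-tuple is a root if every `G`-equivalent but not `H`-equivalent
6-tuple has strictly larger complexity. -/
def Root (f : Tuple) : Prop :=
  Canonical f ∧ ∀ g, GEquiv f g → ¬ HEquiv f g → nu f < nu g

/-- A colour-preserving isomorphism between `Γ(f)` and `Γ(f′)`. -/
def CPIso (f f' : Tuple) : Prop :=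
  ∃ φ : ZMod 3 × ℤ → ZMod 3 × ℤ, Set.BijOn φ (Vtx f) (Vtx f') ∧
    ∀ c : Fin 4, ∀ v ∈ Vtx f, φ (iota f c v) = iota f' c (φ v)

/-- The set of admissible 6-tuples, as a type. -/
abbrev AdmTuple := {f : Tuple // Admissible f}

/-! ### Arithmetic form of conditions (I)–(V) -/

theorem forall_zmod_three {P : ZMod 3 → Prop} : (∀ i, P i) ↔ P 0 ∧ P 1 ∧ P 2 := by
  constructor
  · intro h
    exact ⟨h 0, h 1, h 2⟩
  · rintro ⟨h0, h1, h2⟩ i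
    fin_cases i
    · exact h0
    · exact h1
    · exact h2

@[simp] theorem Tuple.h_zero (f : Tuple) : f.h 0 = f.h0 := rfl
@[simp] theorem Tuple.h_one (f : Tuple) : f.h 1 = f.h1 := rfl
@[simp] theorem Tuple.h_two (f : Tuple) : f.h 2 = f.h2 := rfl
@[simp] theorem Tuple.q_zero (f : Tuple) : f.q 0 = f.q0 := rfl
@[simp] theorem Tuple.q_one (f : Tuple) : f.q 1 = f.q1 := rfl
@[simp] theorem Tuple.q_two (f : Tuple) : f.q 2 = f.q2 := rfl
@[simp] theorem Tuple.twol_zero (f : Tuple) : f.twol 0 = f.h2 + f.h0 := rfl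
@[simp] theorem Tuple.twol_one (f : Tuple) : f.twol 1 = f.h0 + f.h1 := rfl
@[simp] theorem Tuple.twol_two (f : Tuple) : f.twol 2 = f.h1 + f.h2 := rfl

/-- The `h`-entries are positive, and the parity requirements hold. -/
def Parity (f : Tuple) : Prop :=
  0 < f.h0 ∧ 0 < f.h1 ∧ 0 < f.h2 ∧ f.h1 % 2 = f.h0 % 2 ∧ f.h2 % 2 = f.h0 % 2 ∧
    f.q0 % 2 = 1 - f.h0 % 2 ∧ f.q1 % 2 = 1 - f.h0 % 2 ∧ f.q2 % 2 = 1 - f.h0 % 2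

/-- The `q`-entries are least nonnegative residues. -/
def Reduced (f : Tuple) : Prop :=
  (0 ≤ f.q0 ∧ f.q0 < f.h2 + f.h0) ∧ (0 ≤ f.q1 ∧ f.q1 < f.h0 + f.h1) ∧
    (0 ≤ f.q2 ∧ f.q2 < f.h1 + f.h2)

theorem admissible_iff (f : Tuple) :
    Admissible f ↔ Parity f ∧ Reduced f ∧ ThreeOrbits f {2, 3} := by
  have key : ∀ a b : ℤ, (a + b) % 2 = 1 ↔ b % 2 = 1 - a % 2 := by omega
  simp only [Admissible, CondsI_IV, key, CondI, CondII, CondIII, CondIV, CondV, forall_zmod_three,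
    Parity, Reduced, Tuple.h_zero, Tuple.h_one, Tuple.h_two, Tuple.q_zero, Tuple.q_one,
    Tuple.q_two, Tuple.twol_zero, Tuple.twol_one, Tuple.twol_two]
  constructor
  · rintro ⟨⟨⟨p0, p1, p2⟩, ⟨-, h01, h02⟩, h'⟩, ⟨o0, o1, o2⟩, h''⟩
    exact ⟨⟨p0, p1, p2, by linarith [h01.1], by linarith [h01.1],
      by linarith, by linarith [h01.1], by linarith [h01.1]⟩, h'.1, h''⟩
  · rintro ⟨⟨p0, p1, p2, e1, e2, o0, o1, o2⟩, h', h''⟩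
    refine ⟨⟨⟨p0, p1, p2⟩, ?_, h', ?_⟩, ?_, h''⟩ <;> constructorm* _ ∧ _ <;>
      first | trivial | linarith

/-- Reduce the `q`-entries to least nonnegative residues. -/
def reduce (f : Tuple) : Tuple :=
  ⟨f.h0, f.h1, f.h2, f.q0 % (f.h2 + f.h0), f.q1 % (f.h0 + f.h1), f.q2 % (f.h1 + f.h2)⟩

theorem reduce_reduced {f : Tuple} (hf : Parity f) : Reduced (reduce f) := by
  obtain ⟨h0, h1, h2, -⟩ := hf
  refine ⟨⟨Int.emod_nonneg _ ?_, Int.emod_lt_of_pos _ ?_⟩,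
    ⟨Int.emod_nonneg _ ?_, Int.emod_lt_of_pos _ ?_⟩,
    ⟨Int.emod_nonneg _ ?_, Int.emod_lt_of_pos _ ?_⟩⟩ <;> omega

theorem reduce_parity {f : Tuple} (hf : Parity f) : Parity (reduce f) := by
  obtain ⟨h0, h1, h2, p1, p2, p3, p4, p5⟩ := hf
  have e0 := Int.emod_emod_of_dvd f.q0 (show 2 ∣ f.h2 + f.h0 by omega)
  have e1 := Int.emod_emod_of_dvd f.q1 (show 2 ∣ f.h0 + f.h1 by omega)
  have e2 := Int.emod_emod_of_dvd f.q2 (show 2 ∣ f.h1 + f.h2 by omega)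
  refine ⟨h0, h1, h2, p1, p2, ?_, ?_, ?_⟩ <;> simp only [reduce] <;> omega

/-! ### Invariant labellings -/

/-- A labelling of the three circles, lifted to `ℤ`, which is constant on the `{2,3}`-residues. -/
structure IsLabelling {X : Type*} (f : Tuple) (c : ZMod 3 → ℤ → X) : Prop where
  periodic : ∀ i j, c i (j + f.twol i) = c i j
  front : ∀ i j, 0 ≤ j → j < f.h i → c i j = c (i + 1) (-j - 1)
  back : ∀ i j, 0 ≤ j → j < f.h i → c i (j + f.q i) = c (i + 1) (-j - 1 + f.q (i + 1))

/-- There is an invariant labelling that uses each of `n` labels. -/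
def HasLabelling (n : ℕ) (f : Tuple) : Prop :=
  ∃ c : ZMod 3 → ℤ → Fin n, IsLabelling f c ∧ ∀ k, ∃ i j, c i j = k

theorem periodic_eq {X : Type*} {c : ℤ → X} {n : ℤ} (hc : ∀ j, c (j + n) = c j) {x y : ℤ}
    (h : n ∣ x - y) : c x = c y := by
  obtain ⟨m, hm⟩ := h
  have key : c (y + m * n) = c y := Function.Periodic.int_mul hc m y
  rw [← key]
  congr 1
  linarith [mul_comm m n]

theorem periodic_emod {X : Type*} {c : ℤ → X} {n : ℤ} (hc : ∀ j, c (j + n) = c j) (x : ℤ) :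
    c (x % n) = c x :=
  periodic_eq hc (Int.dvd_sub_self_of_emod_eq rfl)

theorem periodic_emod_add {X : Type*} {c : ℤ → X} {n : ℤ} (hc : ∀ j, c (j + n) = c j) (x y : ℤ) :
    c (x % n + y) = c (x + y) :=
  periodic_eq hc (by simpa using Int.dvd_sub_self_of_emod_eq (rfl : x % n = x % n))

theorem periodic_add_emod {X : Type*} {c : ℤ → X} {n : ℤ} (hc : ∀ j, c (j + n) = c j) (x y : ℤ) :
    c (x + y % n) = c (x + y) :=
  periodic_eq hc (by simpa using Int.dvd_sub_self_of_emod_eq (rfl : y % n = y % n))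

section
variable {X : Type*} {f : Tuple}

theorem iota2_eq_of_front {c : ZMod 3 → ℤ → X} (hper : ∀ i j, c i (j + f.twol i) = c i j)
    (hfront : ∀ i j, 0 ≤ j → j < f.h i → c i j = c (i + 1) (-j - 1)) {p : ZMod 3 × ℤ}
    (hp : p ∈ Vtx f) : c (iota2 f p).1 (iota2 f p).2 = c p.1 p.2 := by
  obtain ⟨i, j⟩ := p
  obtain ⟨h0, h1⟩ := hp
  dsimp only at h0 h1
  unfold iota2
  split_ifs with h
  · dsimp only at h ⊢
    rw [periodic_emod (hper _), ← hfront i j h0 h]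
  · dsimp only at h ⊢
    have h2 : f.twol i = f.h (i - 1) + f.h i := rfl
    rw [periodic_emod (hper _), hfront (i - 1) _ (by omega) (by omega), sub_add_cancel]
    exact periodic_eq (hper i) ⟨-1, by ring⟩

theorem twol_pos (hf : CondI f) (i : ZMod 3) : 0 < f.twol i := add_pos (hf _) (hf _)

theorem mem_vtx_emod (hf : CondI f) (i : ZMod 3) (j : ℤ) : (i, j % f.twol i) ∈ Vtx f :=
  ⟨Int.emod_nonneg _ (twol_pos hf i).ne', Int.emod_lt_of_pos _ (twol_pos hf i)⟩

theorem IsLabelling.step_eq {c : ZMod 3 → ℤ → X} (hc : IsLabelling f c) (hf : CondI f)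
    {p p' : ZMod 3 × ℤ} (hp : Step f {2, 3} p p') : c p.1 p.2 = c p'.1 p'.2 := by
  obtain ⟨hp, -, k, hk | hk, rfl⟩ := hp
  · subst hk
    exact (iota2_eq_of_front hc.periodic hc.front hp).symm
  · rw [Set.mem_singleton_iff] at hk
    subst hk
    change _ = c (rho f (iota2 f (rhoInv f p))).1 (rho f (iota2 f (rhoInv f p))).2
    have hper : ∀ i j, c i (j + f.twol i + f.q i) = c i (j + f.q i) := fun i j => by
      rw [add_right_comm, hc.periodic]
    have key := iota2_eq_of_front (c := fun i j => c i (j + f.q i)) hper hc.back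
      (p := rhoInv f p) (mem_vtx_emod hf _ _)
    simp only [rho]
    rw [periodic_emod (hc.periodic _)]
    refine Eq.symm (key.trans ?_)
    simp only [rhoInv]
    rw [periodic_emod_add (hc.periodic _), sub_add_cancel]

theorem IsLabelling.orbRel_eq {c : ZMod 3 → ℤ → X} (hc : IsLabelling f c) (hf : CondI f)
    {p p' : ZMod 3 × ℤ} (hp : OrbRel f {2, 3} p p') : c p.1 p.2 = c p'.1 p'.2 := by
  induction hp with
  | rel _ _ h => exact hc.step_eq hf h
  | refl => rfl
  | symm _ _ _ ih => exact ih.symm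
  | trans _ _ _ _ _ ih ih' => exact ih.trans ih'

theorem isLabelling_of_orbRel (hf : CondI f) {d : ZMod 3 × ℤ → X}
    (hd : ∀ p p', OrbRel f {2, 3} p p' → d p = d p') :
    IsLabelling f (fun i j => d (i, j % f.twol i)) := by
  have hlt : ∀ i, f.h i < f.twol i := fun i => lt_add_of_pos_left _ (hf _)
  refine ⟨fun i j => by simp, fun i j h0 h1 => ?_, fun i j h0 h1 => ?_⟩
  · have e : j % f.twol i = j := Int.emod_eq_of_lt h0 (h1.trans (hlt i))
    refine hd _ _ (.rel _ _ ⟨mem_vtx_emod hf _ _, mem_vtx_emod hf _ _, 2, by simp, ?_⟩)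
    simp [iota, iota2, e, h1]
  · have e : ((j + f.q i) % f.twol i - f.q i) % f.twol i = j := by
      rw [Int.emod_sub_emod, add_sub_cancel_right, Int.emod_eq_of_lt h0 (h1.trans (hlt i))]
    refine hd _ _ (.rel _ _ ⟨mem_vtx_emod hf _ _, mem_vtx_emod hf _ _, 3, by simp, ?_⟩)
    simp [iota, iota3, rho, rhoInv, iota2, e, h1]

end

theorem threeOrbits_iff {f : Tuple} (hf : CondI f) :
    ThreeOrbits f {2, 3} ↔ HasLabelling 3 f ∧ ¬ HasLabelling 4 f := by
  classical
  constructor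
  · rintro ⟨a, b, c, ha, hb, hc, hab, hac, hbc, hcov⟩
    constructor
    · let d : ZMod 3 × ℤ → Fin 3 := fun v =>
        if OrbRel f {2, 3} a v then 0 else if OrbRel f {2, 3} b v then 1 else 2
      have hd : ∀ p p', OrbRel f {2, 3} p p' → d p = d p' := fun p p' h => by
        have e : ∀ x, OrbRel f {2, 3} x p ↔ OrbRel f {2, 3} x p' := fun x =>
          ⟨fun h' => .trans _ _ _ h' h, fun h' => .trans _ _ _ h' (.symm _ _ h)⟩
        simp only [d, e]
      have hmod : ∀ p ∈ Vtx f, p.2 % f.twol p.1 = p.2 := fun p hp => Int.emod_eq_of_lt hp.1 hp.2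
      have hba : ¬ OrbRel f {2, 3} b a := fun h => hab (.symm _ _ h)
      refine ⟨_, isLabelling_of_orbRel hf hd, fun k => ?_⟩
      fin_cases k
      · refine ⟨a.1, a.2, ?_⟩
        simp only [hmod a ha, d]
        exact if_pos (.refl _)
      · refine ⟨b.1, b.2, ?_⟩
        simp only [hmod b hb, d]
        exact (if_neg hab).trans (if_pos (.refl _))
      · refine ⟨c.1, c.2, ?_⟩
        simp only [hmod c hc, d]
        exact (if_neg hac).trans (if_neg hbc)
    · rintro ⟨l, hl, hsurj⟩
      have hval : ∀ k, k = l a.1 a.2 ∨ k = l b.1 b.2 ∨ k = l c.1 c.2 := fun k => by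
        obtain ⟨i, j, rfl⟩ := hsurj k
        rw [← periodic_emod (hl.periodic i) j]
        rcases hcov _ (mem_vtx_emod hf i j) with h | h | h
        · exact .inl (hl.orbRel_eq hf h).symm
        · exact .inr (.inl (hl.orbRel_eq hf h).symm)
        · exact .inr (.inr (hl.orbRel_eq hf h).symm)
      have v0 := hval 0
      have v1 := hval 1
      have v2 := hval 2
      have v3 := hval 3
      omega
  · rintro ⟨⟨l, hl, hsurj⟩, hno⟩
    have hrep : ∀ k, ∃ p ∈ Vtx f, l p.1 p.2 = k := fun k => by
      obtain ⟨i, j, rfl⟩ := hsurj k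
      exact ⟨_, mem_vtx_emod hf i j, periodic_emod (hl.periodic i) j⟩
    obtain ⟨a, ha, ea⟩ := hrep 0
    obtain ⟨b, hb, eb⟩ := hrep 1
    obtain ⟨c, hc, ec⟩ := hrep 2
    have hab : ¬ OrbRel f {2, 3} a b := fun h => by
      have := hl.orbRel_eq hf h
      omega
    have hac : ¬ OrbRel f {2, 3} a c := fun h => by
      have := hl.orbRel_eq hf h
      omega
    have hbc : ¬ OrbRel f {2, 3} b c := fun h => by
      have := hl.orbRel_eq hf h
      omega
    refine ⟨a, b, c, ha, hb, hc, hab, hac, hbc, ?_⟩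
    by_contra! hv
    obtain ⟨v, hv, hav, hbv, hcv⟩ := hv
    apply hno
    let d : ZMod 3 × ℤ → Fin 4 := fun v =>
      if OrbRel f {2, 3} a v then 0 else if OrbRel f {2, 3} b v then 1
      else if OrbRel f {2, 3} c v then 2 else 3
    have hd : ∀ p p', OrbRel f {2, 3} p p' → d p = d p' := fun p p' h => by
      have e : ∀ x, OrbRel f {2, 3} x p ↔ OrbRel f {2, 3} x p' := fun x =>
        ⟨fun h' => .trans _ _ _ h' h, fun h' => .trans _ _ _ h' (.symm _ _ h)⟩
      simp only [d, e]
    have hmod : ∀ p ∈ Vtx f, p.2 % f.twol p.1 = p.2 := fun p hp => Int.emod_eq_of_lt hp.1 hp.2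
    refine ⟨_, isLabelling_of_orbRel hf hd, fun k => ?_⟩
    fin_cases k
    · refine ⟨a.1, a.2, ?_⟩
      simp only [hmod a ha, d]
      exact if_pos (.refl _)
    · refine ⟨b.1, b.2, ?_⟩
      simp only [hmod b hb, d]
      exact (if_neg hab).trans (if_pos (.refl _))
    · refine ⟨c.1, c.2, ?_⟩
      simp only [hmod c hc, d]
      exact (if_neg hac).trans ((if_neg hbc).trans (if_pos (.refl _)))
    · refine ⟨v.1, v.2, ?_⟩
      simp only [hmod v hv, d]
      exact (if_neg hav).trans ((if_neg hbv).trans (if_neg hcv))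

/-! ### Transport of labellings along `ψ₁`, `ψ₂`, `ψ₃` and `σ` -/

section
variable {X : Type*} {f : Tuple}

theorem isLabelling_iff {c : ZMod 3 → ℤ → X} :
    IsLabelling f c ↔
      ((∀ j, c 0 (j + (f.h2 + f.h0)) = c 0 j) ∧ (∀ j, c 1 (j + (f.h0 + f.h1)) = c 1 j) ∧
        (∀ j, c 2 (j + (f.h1 + f.h2)) = c 2 j)) ∧
      ((∀ j, 0 ≤ j → j < f.h0 → c 0 j = c 1 (-j - 1)) ∧
        (∀ j, 0 ≤ j → j < f.h1 → c 1 j = c 2 (-j - 1)) ∧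
        (∀ j, 0 ≤ j → j < f.h2 → c 2 j = c 0 (-j - 1))) ∧
      (∀ j, 0 ≤ j → j < f.h0 → c 0 (j + f.q0) = c 1 (-j - 1 + f.q1)) ∧
        (∀ j, 0 ≤ j → j < f.h1 → c 1 (j + f.q1) = c 2 (-j - 1 + f.q2)) ∧
        (∀ j, 0 ≤ j → j < f.h2 → c 2 (j + f.q2) = c 0 (-j - 1 + f.q0)) :=
  ⟨fun h => ⟨forall_zmod_three.1 h.periodic, forall_zmod_three.1 h.front,
    forall_zmod_three.1 h.back⟩,
   fun h => ⟨forall_zmod_three.2 h.1, forall_zmod_three.2 h.2.1, forall_zmod_three.2 h.2.2⟩⟩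

theorem IsLabelling.reduce {c : ZMod 3 → ℤ → X} (hc : IsLabelling f c) :
    IsLabelling (reduce f) c := by
  obtain ⟨⟨p0, p1, p2⟩, ⟨f0, f1, f2⟩, b0, b1, b2⟩ := isLabelling_iff.1 hc
  refine isLabelling_iff.2 ⟨⟨p0, p1, p2⟩, ⟨f0, f1, f2⟩, ?_⟩
  simp only [GMN.reduce]
  refine ⟨fun j => ?_, fun j => ?_, fun j => ?_⟩ <;>
    simpa only [periodic_add_emod p0, periodic_add_emod p1, periodic_add_emod p2] using by
      first | exact b0 j | exact b1 j | exact b2 j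

theorem HasLabelling.reduce {n : ℕ} (h : HasLabelling n f) : HasLabelling n (reduce f) :=
  let ⟨c, hc, hs⟩ := h
  ⟨c, hc.reduce, hs⟩

theorem HasLabelling.psi1 {n : ℕ} (h : HasLabelling n f) : HasLabelling n (psi1 f) := by
  obtain ⟨c, hc, hs⟩ := h
  obtain ⟨⟨p0, p1, p2⟩, ⟨f0, f1, f2⟩, b0, b1, b2⟩ := isLabelling_iff.1 hc
  refine ⟨fun i => c (i + 1), isLabelling_iff.2 ⟨⟨p1, p2, p0⟩, ⟨f1, f2, f0⟩, b1, b2, b0⟩,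
    fun k => ?_⟩
  obtain ⟨i, j, h⟩ := hs k
  exact ⟨i - 1, j, by simpa using h⟩

theorem HasLabelling.psi2 {n : ℕ} (h : HasLabelling n f) : HasLabelling n (psi2 f) := by
  obtain ⟨c, hc, hs⟩ := h
  obtain ⟨⟨p0, p1, p2⟩, ⟨f0, f1, f2⟩, b0, b1, b2⟩ := isLabelling_iff.1 hc
  refine ⟨fun i j => c (-i) (f.q (-i) - 1 - j), isLabelling_iff.2 ⟨⟨fun j => ?_, fun j => ?_,
    fun j => ?_⟩, ⟨fun j h0 h1 => ?_, fun j h0 h1 => ?_, fun j h0 h1 => ?_⟩, fun j h0 h1 => ?_,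
    fun j h0 h1 => ?_, fun j h0 h1 => ?_⟩, fun k => ?_⟩
  · exact periodic_eq p0 ⟨-1, by simp only [GMN.psi2]; ring⟩
  · exact periodic_eq p2 ⟨-1, by simp only [GMN.psi2]; ring⟩
  · exact periodic_eq p1 ⟨-1, by simp only [GMN.psi2]; ring⟩
  · change c 0 (f.q0 - 1 - j) = c 2 (f.q2 - 1 - (-j - 1))
    rw [show f.q2 - 1 - (-j - 1) = j + f.q2 by ring, b2 j h0 h1]
    ring_nf
  · change c 2 (f.q2 - 1 - j) = c 1 (f.q1 - 1 - (-j - 1))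
    rw [show f.q1 - 1 - (-j - 1) = j + f.q1 by ring, b1 j h0 h1]
    ring_nf
  · change c 1 (f.q1 - 1 - j) = c 0 (f.q0 - 1 - (-j - 1))
    rw [show f.q0 - 1 - (-j - 1) = j + f.q0 by ring, b0 j h0 h1]
    ring_nf
  · change c 0 (f.q0 - 1 - (j + f.q0)) = c 2 (f.q2 - 1 - (-j - 1 + f.q2))
    rw [show f.q2 - 1 - (-j - 1 + f.q2) = j by ring, f2 j h0 h1]
    ring_nf
  · change c 2 (f.q2 - 1 - (j + f.q2)) = c 1 (f.q1 - 1 - (-j - 1 + f.q1))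
    rw [show f.q1 - 1 - (-j - 1 + f.q1) = j by ring, f1 j h0 h1]
    ring_nf
  · change c 1 (f.q1 - 1 - (j + f.q1)) = c 0 (f.q0 - 1 - (-j - 1 + f.q0))
    rw [show f.q0 - 1 - (-j - 1 + f.q0) = j by ring, f0 j h0 h1]
    ring_nf
  · obtain ⟨i, j, h⟩ := hs k
    exact ⟨-i, f.q i - 1 - j, by simpa using h⟩

/-- `ψ₃` before reduction of the `q`-entries. -/
def negTwist (f : Tuple) : Tuple := ⟨f.h0, f.h1, f.h2, -f.q0, -f.q1, -f.q2⟩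

theorem HasLabelling.psi3 {n : ℕ} (h : HasLabelling n f) : HasLabelling n (psi3 f) := by
  refine HasLabelling.reduce (f := negTwist f) ?_
  obtain ⟨c, hc, hs⟩ := h
  obtain ⟨⟨p0, p1, p2⟩, -, b⟩ := isLabelling_iff.1 hc
  refine ⟨fun i j => c i (j + f.q i), isLabelling_iff.2 ⟨⟨fun j => ?_, fun j => ?_,
    fun j => ?_⟩, b, ?_⟩, fun k => ?_⟩
  · exact periodic_eq p0 ⟨1, by simp only [negTwist]; ring⟩
  · exact periodic_eq p1 ⟨1, by simp only [negTwist]; ring⟩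
  · exact periodic_eq p2 ⟨1, by simp only [negTwist]; ring⟩
  · simpa [negTwist] using (isLabelling_iff.1 hc).2.1
  · obtain ⟨i, j, h⟩ := hs k
    exact ⟨i, j - f.q i, by simpa using h⟩

theorem IsLabelling.exists_eq {c : ZMod 3 → ℤ → X} (hc : IsLabelling f c) (hf : Parity f)
    (i : ZMod 3) (j : ℤ) : ∃ x, c 1 x = c i j ∨ c 2 x = c i j := by
  obtain ⟨⟨p0, p1, p2⟩, ⟨f0, f1, f2⟩, b0, b1, b2⟩ := isLabelling_iff.1 hc
  obtain ⟨h0, h1, h2, -⟩ := hf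
  revert i
  refine forall_zmod_three.2 ⟨?_, ⟨j, .inl rfl⟩, ⟨j, .inr rfl⟩⟩
  rw [← periodic_emod p0 j]
  have l0 := Int.emod_nonneg j (show f.h2 + f.h0 ≠ 0 by omega)
  have l1 := Int.emod_lt_of_pos j (show 0 < f.h2 + f.h0 by omega)
  generalize j % (f.h2 + f.h0) = x at *
  by_cases hx : x < f.h0
  · exact ⟨_, .inl (f0 x l0 hx).symm⟩
  · refine ⟨f.h2 + f.h0 - x - 1, .inr ((f2 _ (by omega) (by omega)).trans ?_)⟩
    exact periodic_eq p0 ⟨-1, by ring⟩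

/-- The restriction of an invariant labelling to the circles `1` and `2`: apart from the arcs
that join these two circles, it is subject to conditions indexed by the arcs that cross
circle `0`. -/
structure IsArcLabelling (f : Tuple) (a b : ℤ → X) : Prop where
  pa : ∀ j, a (j + (f.h0 + f.h1)) = a j
  pb : ∀ j, b (j + (f.h1 + f.h2)) = b j
  front : ∀ j, 0 ≤ j → j < f.h1 → a j = b (-j - 1)
  back : ∀ j, 0 ≤ j → j < f.h1 → a (j + f.q1) = b (-j - 1 + f.q2)
  ab : ∀ j, 0 ≤ j → j < f.h0 → f.q0 - f.h2 ≤ j → j < f.q0 →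
    a (-j - 1) = b (-j - 1 + f.q0 + f.q2)
  aa : ∀ j, f.q0 ≤ j → j < f.h0 → a (-j - 1) = a (-j - 1 + f.q0 + f.q1)
  bb : ∀ j, f.q0 - f.h2 ≤ j → j < 0 → b (-j - 1) = b (-j - 1 + f.q0 + f.q2)
  ba : ∀ j, f.h0 ≤ j → j < f.h2 + f.h0 → f.q0 ≤ j → j < f.q0 + f.h0 →
    b (-j - 1 + (f.h2 + f.h0)) = a (-j - 1 + f.q0 + f.q1)
  bb' : ∀ j, f.h0 ≤ j → j < f.q0 →
    b (-j - 1 + (f.h2 + f.h0)) = b (-j - 1 + f.q0 + f.q2)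
  aa' : ∀ j, f.h2 + f.h0 ≤ j → j < f.q0 + f.h0 →
    a (-j - 1 + (f.h2 + f.h0)) = a (-j - 1 + f.q0 + f.q1)

theorem IsLabelling.isArcLabelling {c : ZMod 3 → ℤ → X} (hc : IsLabelling f c) (hf : Parity f)
    (hq : 0 ≤ f.q0 ∧ f.q0 < f.h2 + f.h0) : IsArcLabelling f (c 1) (c 2) := by
  obtain ⟨⟨p0, p1, p2⟩, ⟨f0, f1, f2⟩, b0, b1, b2⟩ := isLabelling_iff.1 hc
  obtain ⟨h0, h1, h2, -⟩ := hf
  have u0 : ∀ j, 0 ≤ j → j < f.h0 → c 1 (-j - 1) = c 0 j := fun j l l' => (f0 j l l').symm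
  have u2 : ∀ j, -f.h2 ≤ j → j < 0 → c 2 (-j - 1) = c 0 j := fun j l l' => by
    rw [f2 _ (by omega) (by omega)]
    ring_nf
  have u2' : ∀ j, f.h0 ≤ j → j < f.h2 + f.h0 → c 2 (-j - 1 + (f.h2 + f.h0)) = c 0 j :=
    fun j l l' => by
      rw [f2 _ (by omega) (by omega)]
      exact periodic_eq p0 ⟨-1, by ring⟩
  have u0' : ∀ j, f.h2 + f.h0 ≤ j → j < f.h2 + f.h0 + f.h0 →
      c 1 (-j - 1 + (f.h2 + f.h0)) = c 0 j := fun j l l' => by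
    rw [← sub_add_cancel j (f.h2 + f.h0), p0, ← u0 _ (by omega) (by omega)]
    ring_nf
  have v0 : ∀ j, f.q0 ≤ j → j < f.q0 + f.h0 → c 0 j = c 1 (-j - 1 + f.q0 + f.q1) :=
    fun j l l' => by
      rw [← sub_add_cancel j f.q0, b0 _ (by omega) (by omega)]
      ring_nf
  have v2 : ∀ j, f.q0 - f.h2 ≤ j → j < f.q0 → c 0 j = c 2 (-j - 1 + f.q0 + f.q2) :=
    fun j l l' => by
      rw [b2 _ (by omega) (by omega)]
      ring_nf
  exact
    { pa := p1
      pb := p2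
      front := f1
      back := b1
      ab := fun j l1 l2 l3 l4 => (u0 j l1 l2).trans (v2 j l3 l4)
      aa := fun j l1 l2 => (u0 j (by omega) l2).trans (v0 j l1 (by omega))
      bb := fun j l1 l2 => (u2 j (by omega) l2).trans (v2 j l1 (by omega))
      ba := fun j l1 l2 l3 l4 => (u2' j l1 l2).trans (v0 j l3 l4)
      bb' := fun j l1 l2 => (u2' j l1 (by omega)).trans (v2 j (by omega) l2)
      aa' := fun j l1 l2 => (u0' j l1 (by omega)).trans (v0 j (by omega) l2) }

theorem IsArcLabelling.exists_isLabelling {a b : ℤ → X} (hab : IsArcLabelling f a b)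
    (hf : Parity f) (hq : 0 ≤ f.q0 ∧ f.q0 < f.h2 + f.h0) :
    ∃ c : ZMod 3 → ℤ → X, IsLabelling f c ∧ c 1 = a ∧ c 2 = b := by
  obtain ⟨pa, pb, front, back, hab, haa, hbb, hba, hbb', haa'⟩ := hab
  obtain ⟨h0, h1, h2, -⟩ := hf
  obtain ⟨hq0, hq1⟩ := hq
  let u : ℤ → X := fun j => if j < 0 then b (-j - 1) else a (-j - 1)
  let d : ℤ → X := fun j => u ((j + f.h2) % (f.h2 + f.h0) - f.h2)
  have pd : ∀ j, d (j + (f.h2 + f.h0)) = d j := fun j => by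
    simp only [d]
    rw [show j + (f.h2 + f.h0) + f.h2 = j + f.h2 + (f.h2 + f.h0) by ring, Int.add_emod_right]
  have hd : ∀ j, -f.h2 ≤ j → j < f.h0 → d j = u j := fun j hj hj' => by
    simp only [d]
    rw [Int.emod_eq_of_lt (by omega) (by omega), add_sub_cancel_right]
  have hd' : ∀ j, f.h0 ≤ j → j < 2 * f.h0 + f.h2 → d j = u (j - (f.h2 + f.h0)) :=
    fun j hj hj' => by
      rw [← hd _ (by omega) (by omega), ← pd (j - (f.h2 + f.h0)),
        sub_add_cancel]
  have un : ∀ j, j < 0 → u j = b (-j - 1) := fun j hj => if_pos hj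
  have up : ∀ j, 0 ≤ j → u j = a (-j - 1) := fun j hj => if_neg (by omega)
  refine ⟨fun i => if i = 0 then d else if i = 1 then a else b, isLabelling_iff.2
    ⟨⟨pd, pa, pb⟩, ⟨?_, front, ?_⟩, ?_, back, ?_⟩, rfl, rfl⟩
  · intro j hj hj'
    exact (hd j (by omega) hj').trans (up j hj)
  · intro j hj hj'
    refine Eq.symm ((hd _ (by omega) (by omega)).trans ((un _ (by omega)).trans ?_))
    congr 1
    ring
  · intro j hj hj'
    change d (j + f.q0) = a (-j - 1 + f.q1)
    have e : a (-j - 1 + f.q1) = a (-(j + f.q0) - 1 + f.q0 + f.q1) := by ring_nf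
    rw [e]
    have hx : f.q0 ≤ j + f.q0 := by omega
    have hx' : j + f.q0 < f.q0 + f.h0 := by omega
    generalize j + f.q0 = x at hx hx' ⊢
    by_cases l1 : x < f.h0
    · rw [hd _ (by omega) l1, up _ (by omega), haa _ hx l1]
    · rw [hd' _ (by omega) (by omega)]
      by_cases l2 : x < f.h2 + f.h0
      · rw [un _ (by omega), ← hba _ (by omega) l2 hx hx']
        ring_nf
      · rw [up _ (by omega), ← haa' _ (by omega) hx']
        ring_nf
  · intro j hj hj'
    change b (j + f.q2) = d (-j - 1 + f.q0)
    have e : b (j + f.q2) = b (-(-j - 1 + f.q0) - 1 + f.q0 + f.q2) := by ring_nf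
    rw [e]
    have hx : f.q0 - f.h2 ≤ -j - 1 + f.q0 := by omega
    have hx' : -j - 1 + f.q0 < f.q0 := by omega
    generalize -j - 1 + f.q0 = x at hx hx' ⊢
    by_cases l1 : x < f.h0
    · rw [hd _ (by omega) l1]
      by_cases l2 : x < 0
      · rw [un _ l2, hbb _ hx l2]
      · rw [up _ (by omega), hab _ (by omega) l1 hx hx']
    · rw [hd' _ (by omega) (by omega), un _ (by omega), ← hbb' _ (by omega) hx']
      ring_nf

end

theorem HasLabelling.of_arcs {n : ℕ} {f g : Tuple} (h : HasLabelling n f) (hf : Parity f)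
    (hf' : 0 ≤ f.q0 ∧ f.q0 < f.h2 + f.h0) (hg : Parity g)
    (hg' : 0 ≤ g.q0 ∧ g.q0 < g.h2 + g.h0) (s t : ℤ)
    (H : ∀ a b : ℤ → Fin n, IsArcLabelling f a b →
      IsArcLabelling g (fun j => a (j + s)) (fun j => b (t - j))) : HasLabelling n g := by
  obtain ⟨c, hc, hs⟩ := h
  obtain ⟨d, hd, h1, h2⟩ := (H _ _ (hc.isArcLabelling hf hf')).exists_isLabelling hg hg'
  refine ⟨d, hd, fun k => ?_⟩
  obtain ⟨i, j, rfl⟩ := hs k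
  obtain ⟨x, hx | hx⟩ := hc.exists_eq hf i j
  · exact ⟨1, x - s, by simpa [h1] using hx⟩
  · exact ⟨2, t - x, by simpa [h2] using hx⟩

/-- The first branch of `σ` before reduction of the `q`-entries. -/
def sigmaShort (f : Tuple) : Tuple :=
  ⟨f.h0 + f.h1 - f.q0, f.q0, f.h2 + f.h1 - f.q0,
    f.h0 + f.h1 + f.h2 - 2 * f.q0, f.q0 + f.q1 + f.h1, f.q0 + f.q2 + f.h1⟩

/-- The second branch of `σ` before reduction of the `q`-entries. -/
def sigmaLong (f : Tuple) : Tuple :=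
  ⟨f.q0 + f.h1 - f.h2, f.h0 + f.h2 - f.q0, f.q0 + f.h1 - f.h0,
    f.h1, f.q0 + f.q1 - f.h2, f.q0 + f.q2 - f.h0⟩

/-- The third branch of `σ` before reduction of the `q`-entries. -/
def sigmaMiddle (f : Tuple) : Tuple :=
  ⟨f.h1, f.h0, f.h1 + f.h2 - f.h0, f.h1 + f.h2 - f.q0, f.q1, 2 * f.q0 + f.q2 + f.h1 - f.h0⟩

/-- The fourth branch of `σ` before reduction of the `q`-entries. -/
def sigmaMiddle' (f : Tuple) : Tuple :=
  ⟨f.h1 + f.h0 - f.h2, f.h2, f.h1, f.h1 + f.h0 - f.q0, 2 * f.q0 + f.q1 + f.h1 - f.h2, f.q2⟩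

theorem sigma_of_short {f : Tuple} (h : 0 < f.q0) (h0 : f.q0 < f.h0) (h2 : f.q0 < f.h2) :
    sigma f = reduce (sigmaShort f) := by
  rw [sigma, if_neg h.ne', if_pos ⟨h0, h2⟩]
  rfl

theorem sigma_of_long {f : Tuple} (h : 0 < f.q0) (h0 : f.h0 < f.q0) (h2 : f.h2 < f.q0) :
    sigma f = reduce (sigmaLong f) := by
  rw [sigma, if_neg h.ne', if_neg (by omega), if_pos ⟨h0, h2⟩]
  rfl

theorem sigma_of_middle {f : Tuple} (h : 0 < f.q0) (h0 : f.h0 < f.q0) (h2 : f.q0 < f.h2) :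
    sigma f = reduce (sigmaMiddle f) := by
  rw [sigma, if_neg h.ne', if_neg (by omega), if_neg (by omega), if_pos h2]
  rfl

theorem sigma_of_middle' {f : Tuple} (h : 0 < f.q0) (h0 : f.q0 < f.h0) (h2 : f.h2 < f.q0) :
    sigma f = reduce (sigmaMiddle' f) := by
  rw [sigma, if_neg h.ne', if_neg (by omega), if_neg (by omega), if_neg (by omega)]
  rfl

theorem sigma_of_eq_zero {f : Tuple} (h : f.q0 = 0) : sigma f = f := if_pos h

theorem sigma_cases {f : Tuple} (hf : Parity f) (hf' : Reduced f) :
    f.q0 = 0 ∨ (0 < f.q0 ∧ f.q0 < f.h0 ∧ f.q0 < f.h2) ∨ (0 < f.q0 ∧ f.h0 < f.q0 ∧ f.h2 < f.q0) ∨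
      (0 < f.q0 ∧ f.h0 < f.q0 ∧ f.q0 < f.h2) ∨ (0 < f.q0 ∧ f.q0 < f.h0 ∧ f.h2 < f.q0) := by
  obtain ⟨-, -, -, -, p2, p3, -⟩ := hf
  obtain ⟨⟨r, -⟩, -⟩ := hf'
  have h0 : f.q0 ≠ f.h0 := fun h => by omega
  have h2 : f.q0 ≠ f.h2 := fun h => by omega
  omega

theorem parity_sigmaShort {f : Tuple} (hf : Parity f) (h : 0 < f.q0) (h0 : f.q0 < f.h0)
    (h2 : f.q0 < f.h2) : Parity (sigmaShort f) := by
  simp only [Parity, sigmaShort] at *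
  refine ⟨?_, ?_, ?_, ?_⟩ <;> omega

theorem parity_sigmaLong {f : Tuple} (hf : Parity f) (hf' : Reduced f) (h0 : f.h0 < f.q0)
    (h2 : f.h2 < f.q0) : Parity (sigmaLong f) := by
  simp only [Parity, Reduced, sigmaLong] at *
  refine ⟨?_, ?_, ?_, ?_⟩ <;> omega

theorem parity_sigmaMiddle {f : Tuple} (hf : Parity f) (h0 : f.h0 < f.q0)
    (h2 : f.q0 < f.h2) : Parity (sigmaMiddle f) := by
  simp only [Parity, sigmaMiddle] at *
  refine ⟨?_, ?_, ?_, ?_⟩ <;> omega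

theorem parity_sigmaMiddle' {f : Tuple} (hf : Parity f) (h0 : f.q0 < f.h0)
    (h2 : f.h2 < f.q0) : Parity (sigmaMiddle' f) := by
  simp only [Parity, sigmaMiddle'] at *
  refine ⟨?_, ?_, ?_, ?_⟩ <;> omega

section
variable {X : Type*} {f : Tuple} {a b : ℤ → X}

theorem IsArcLabelling.sigmaShort (hab : IsArcLabelling f a b)
    (h0 : f.q0 < f.h0) (h2 : f.q0 < f.h2) :
    IsArcLabelling (sigmaShort f) (fun j => a (j + -f.q0)) (fun j => b (f.q2 - 1 - j)) := by
  obtain ⟨pa, pb, front, back, hab, haa, hbb, hba, hbb', haa'⟩ := hab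
  constructor <;> intro j <;> simp only [GMN.sigmaShort] <;> intros
  · exact periodic_eq pa ⟨1, by ring⟩
  · exact periodic_eq pb ⟨-1, by ring⟩
  · refine (periodic_eq pa ?_).trans
      ((hab (f.q0 - 1 - j) (by omega) (by omega) (by omega) (by omega)).trans
        (periodic_eq pb ?_))
    · exact ⟨0, by ring⟩
    · exact ⟨0, by ring⟩
  · refine (periodic_eq pa ?_).trans
      ((hba (f.h0 + f.q0 - 1 - j) (by omega) (by omega) (by omega) (by omega)).symm.trans
        (periodic_eq pb ?_))
    · exact ⟨1, by ring⟩
    · exact ⟨1, by ring⟩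
  · refine (periodic_eq pa ?_).trans
      ((front (f.h0 + f.h1 - f.q0 - 1 - j) (by omega) (by omega)).trans
        (periodic_eq pb ?_))
    · exact ⟨-1, by ring⟩
    · exact ⟨1, by ring⟩
  · omega
  · omega
  · refine (periodic_eq pb ?_).trans
      ((back (f.h0 + f.h2 + 2 * f.h1 - 2 * f.q0 - 1 - j) (by omega) (by omega)).symm.trans
        (periodic_eq pa ?_))
    · exact ⟨0, by ring⟩
    · exact ⟨0, by ring⟩
  · refine (periodic_eq pb ?_).trans
      ((hbb (f.h0 + f.h1 - f.q0 - 1 - j) (by omega) (by omega)).symm.trans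
        (periodic_eq pb ?_))
    · exact ⟨-1, by ring⟩
    · exact ⟨1, by ring⟩
  · refine (periodic_eq pa ?_).trans
      ((haa (j - (f.h0 + f.h2 + 2 * f.h1 - 2 * f.q0) + f.q0) (by omega) (by omega)).trans
        (periodic_eq pa ?_))
    · exact ⟨0, by ring⟩
    · exact ⟨0, by ring⟩

theorem IsArcLabelling.sigmaLong (hab : IsArcLabelling f a b)
    (h0 : f.h0 < f.q0) (h2 : f.h2 < f.q0) :
    IsArcLabelling (sigmaLong f) (fun j => a (j + f.h1))
      (fun j => b (f.q0 + f.q2 - f.h0 - 1 - j)) := by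
  obtain ⟨pa, pb, front, back, hab, haa, hbb, hba, hbb', haa'⟩ := hab
  constructor <;> intro j <;> simp only [GMN.sigmaLong] <;> intros
  · exact periodic_eq pa ⟨1, by ring⟩
  · exact periodic_eq pb ⟨-1, by ring⟩
  · refine (periodic_eq pa ?_).trans
      ((hab (f.h0 - 1 - j) (by omega) (by omega) (by omega) (by omega)).trans
        (periodic_eq pb ?_))
    · exact ⟨1, by ring⟩
    · exact ⟨0, by ring⟩
  · refine (periodic_eq pa ?_).trans
      ((hba (f.h2 + f.h0 - 1 - j) (by omega) (by omega) (by omega) (by omega)).symm.trans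
        (periodic_eq pb ?_))
    · exact ⟨1, by ring⟩
    · exact ⟨0, by ring⟩
  · refine (periodic_eq pa ?_).trans
      ((front (f.h1 - 1 - j) (by omega) (by omega)).trans
        (periodic_eq pb ?_))
    · exact ⟨0, by ring⟩
    · exact ⟨0, by ring⟩
  · refine (periodic_eq pa ?_).trans
      ((haa' (j + f.h2 + f.h0 - f.h1) (by omega) (by omega)).trans
        (periodic_eq pa ?_))
    · exact ⟨0, by ring⟩
    · exact ⟨-1, by ring⟩
  · refine (periodic_eq pb ?_).trans
      ((hbb' (f.h0 - 1 - j) (by omega) (by omega)).symm.trans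
        (periodic_eq pb ?_))
    · exact ⟨0, by ring⟩
    · exact ⟨1, by ring⟩
  · refine (periodic_eq pb ?_).trans
      ((back (-j - 1 + 2 * f.h1 + f.q0 - f.h2) (by omega) (by omega)).symm.trans
        (periodic_eq pa ?_))
    · exact ⟨0, by ring⟩
    · exact ⟨0, by ring⟩
  · omega
  · omega

theorem IsArcLabelling.sigmaMiddle (hab : IsArcLabelling f a b)
    (h0 : f.h0 < f.q0) (h2 : f.q0 < f.h2) :
    IsArcLabelling (sigmaMiddle f) (fun j => a (j + -f.h0))
      (fun j => b (f.q0 + f.q2 - f.h0 - 1 - j)) := by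
  obtain ⟨pa, pb, front, back, hab, haa, hbb, hba, hbb', haa'⟩ := hab
  constructor <;> intro j <;> simp only [GMN.sigmaMiddle] <;> intros
  · exact periodic_eq pa ⟨1, by ring⟩
  · exact periodic_eq pb ⟨-1, by ring⟩
  · refine (periodic_eq pa ?_).trans
      ((hab (f.h0 - 1 - j) (by omega) (by omega) (by omega) (by omega)).trans
        (periodic_eq pb ?_))
    · exact ⟨0, by ring⟩
    · exact ⟨0, by ring⟩
  · refine (periodic_eq pa ?_).trans
      ((hba (f.q0 + f.h0 - 1 - j) (by omega) (by omega) (by omega) (by omega)).symm.trans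
        (periodic_eq pb ?_))
    · exact ⟨0, by ring⟩
    · exact ⟨1, by ring⟩
  · refine (periodic_eq pa ?_).trans
      ((front (f.h1 - 1 - j) (by omega) (by omega)).trans
        (periodic_eq pb ?_))
    · exact ⟨-1, by ring⟩
    · exact ⟨1, by ring⟩
  · omega
  · refine (periodic_eq pb ?_).trans
      ((hbb' (f.h0 - 1 - j) (by omega) (by omega)).symm.trans
        (periodic_eq pb ?_))
    · exact ⟨0, by ring⟩
    · exact ⟨2, by ring⟩
  · refine (periodic_eq pb ?_).trans
      ((back (-j - 1 + 2 * f.h1 + f.h2 - f.q0) (by omega) (by omega)).symm.trans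
        (periodic_eq pa ?_))
    · exact ⟨0, by ring⟩
    · exact ⟨1, by ring⟩
  · refine (periodic_eq pb ?_).trans
      ((hbb (f.h1 - 1 - j) (by omega) (by omega)).symm.trans
        (periodic_eq pb ?_))
    · exact ⟨-1, by ring⟩
    · exact ⟨1, by ring⟩
  · omega

end

/-! ### Relations between `ψ₁`, `ψ₂`, `ψ₃` and `σ` -/

/-- Conditions (I)–(V), all but the one on `{2,3}`-residues. -/
def Good (f : Tuple) : Prop := Parity f ∧ Reduced f

theorem reduce_congr {f g : Tuple} (h0 : f.h0 = g.h0) (h1 : f.h1 = g.h1) (h2 : f.h2 = g.h2)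
    (q0 : g.h2 + g.h0 ∣ f.q0 - g.q0) (q1 : g.h0 + g.h1 ∣ f.q1 - g.q1)
    (q2 : g.h1 + g.h2 ∣ f.q2 - g.q2) : reduce f = reduce g := by
  simp only [reduce, h0, h1, h2, Tuple.mk.injEq, true_and]
  exact ⟨(Int.modEq_iff_dvd.2 q0).symm, (Int.modEq_iff_dvd.2 q1).symm,
    (Int.modEq_iff_dvd.2 q2).symm⟩

theorem reduce_eq_self {f : Tuple} (hf : Reduced f) : reduce f = f := by
  obtain ⟨⟨a0, a1⟩, ⟨b0, b1⟩, ⟨c0, c1⟩⟩ := hf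
  simp only [reduce, Int.emod_eq_of_lt a0 a1, Int.emod_eq_of_lt b0 b1, Int.emod_eq_of_lt c0 c1]

theorem exists_reduce_eq (f : Tuple) (hq : 0 ≤ f.q0 ∧ f.q0 < f.h2 + f.h0) :
    ∃ k l : ℤ, reduce f =
      ⟨f.h0, f.h1, f.h2, f.q0, f.q1 + (f.h0 + f.h1) * k, f.q2 + (f.h1 + f.h2) * l⟩ := by
  refine ⟨-(f.q1 / (f.h0 + f.h1)), -(f.q2 / (f.h1 + f.h2)), ?_⟩
  simp only [reduce, Int.emod_eq_of_lt hq.1 hq.2, Int.emod_def f.q1, Int.emod_def f.q2, mul_neg,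
    sub_eq_add_neg]

theorem psi3_eq_reduce (f : Tuple) : psi3 f = reduce (negTwist f) := rfl

theorem reduce_psi2 (f : Tuple) : reduce (psi2 f) = psi2 (reduce f) := by
  simp only [reduce, psi2, add_comm]

theorem psi3_psi2 (f : Tuple) : psi3 (psi2 f) = psi2 (psi3 f) := reduce_psi2 (negTwist f)

theorem psi3_psi3 {f : Tuple} (hf : Reduced f) : psi3 (psi3 f) = f := by
  refine Eq.trans (b := reduce f) ?_ (reduce_eq_self hf)
  change reduce (negTwist (reduce (negTwist f))) = _
  refine reduce_congr rfl rfl rfl ?_ ?_ ?_ <;> simp only [negTwist, reduce, Int.emod_def]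
  · exact ⟨-f.q0 / (f.h2 + f.h0), by ring⟩
  · exact ⟨-f.q1 / (f.h0 + f.h1), by ring⟩
  · exact ⟨-f.q2 / (f.h1 + f.h2), by ring⟩

theorem Good.psi1 {f : Tuple} (hf : Good f) : Good (psi1 f) := by
  simp only [Good, Parity, Reduced, GMN.psi1] at *
  omega

theorem Good.psi2 {f : Tuple} (hf : Good f) : Good (psi2 f) := by
  simp only [Good, Parity, Reduced, GMN.psi2] at *
  omega

theorem Good.reduce {f : Tuple} (hf : Parity f) : Good (reduce f) :=
  ⟨reduce_parity hf, reduce_reduced hf⟩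

theorem Good.psi3 {f : Tuple} (hf : Good f) : Good (psi3 f) := by
  refine Good.reduce (f := negTwist f) ?_
  obtain ⟨a, b, c, d, e, p, q, r⟩ := hf.1
  refine ⟨a, b, c, d, e, ?_, ?_, ?_⟩ <;> simp only [negTwist] <;> omega

theorem Good.sigma_cases {f : Tuple} (hf : Good f) :
    (f.q0 = 0 ∧ sigma f = f) ∨
    (0 < f.q0 ∧ f.q0 < f.h0 ∧ f.q0 < f.h2 ∧ sigma f = GMN.reduce (sigmaShort f)) ∨
    (0 < f.q0 ∧ f.h0 < f.q0 ∧ f.h2 < f.q0 ∧ sigma f = GMN.reduce (sigmaLong f)) ∨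
    (0 < f.q0 ∧ f.h0 < f.q0 ∧ f.q0 < f.h2 ∧ sigma f = GMN.reduce (sigmaMiddle f)) ∨
    (0 < f.q0 ∧ f.q0 < f.h0 ∧ f.h2 < f.q0 ∧ sigma f = GMN.reduce (sigmaMiddle' f)) := by
  rcases GMN.sigma_cases hf.1 hf.2 with
    h | ⟨h, h0, h2⟩ | ⟨h, h0, h2⟩ | ⟨h, h0, h2⟩ | ⟨h, h0, h2⟩
  · exact .inl ⟨h, sigma_of_eq_zero h⟩
  · exact .inr (.inl ⟨h, h0, h2, sigma_of_short h h0 h2⟩)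
  · exact .inr (.inr (.inl ⟨h, h0, h2, sigma_of_long h h0 h2⟩))
  · exact .inr (.inr (.inr (.inl ⟨h, h0, h2, sigma_of_middle h h0 h2⟩)))
  · exact .inr (.inr (.inr (.inr ⟨h, h0, h2, sigma_of_middle' h h0 h2⟩)))

theorem Good.sigma {f : Tuple} (hf : Good f) : Good (sigma f) := by
  rcases hf.sigma_cases with ⟨-, e⟩ | ⟨h, h0, h2, e⟩ | ⟨h, h0, h2, e⟩ | ⟨h, h0, h2, e⟩ |
    ⟨h, h0, h2, e⟩ <;> rw [e]
  · exact hf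
  · exact .reduce (parity_sigmaShort hf.1 h h0 h2)
  · exact .reduce (parity_sigmaLong hf.1 hf.2 h0 h2)
  · exact .reduce (parity_sigmaMiddle hf.1 h0 h2)
  · exact .reduce (parity_sigmaMiddle' hf.1 h0 h2)

theorem sigma_psi2 {f : Tuple} (hf : Good f) : sigma (psi2 f) = psi2 (sigma f) := by
  rcases hf.sigma_cases with ⟨h, e⟩ | ⟨h, h0, h2, e⟩ | ⟨h, h0, h2, e⟩ | ⟨h, h0, h2, e⟩ |
    ⟨h, h0, h2, e⟩ <;> rw [e]
  · exact sigma_of_eq_zero h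
  · rw [sigma_of_short (f := psi2 f) h h2 h0, ← reduce_psi2]
    congr 1
    simp only [sigmaShort, psi2, Tuple.mk.injEq, true_and, and_true]
    ring
  · rw [sigma_of_long (f := psi2 f) h h2 h0, ← reduce_psi2]
    congr 1
    simp only [sigmaLong, psi2, Tuple.mk.injEq, true_and, and_true]
    ring
  · rw [sigma_of_middle' (f := psi2 f) h h2 h0, ← reduce_psi2]
    congr 1
  · rw [sigma_of_middle (f := psi2 f) h h2 h0, ← reduce_psi2]
    congr 1

theorem sigma_sigma {f : Tuple} (hf : Good f) : sigma (sigma f) = f := by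
  have middle : ∀ {f : Tuple}, Good f → 0 < f.q0 → f.h0 < f.q0 → f.q0 < f.h2 →
      sigma (sigma f) = f := fun {f} hf h h0 h2 => by
    obtain ⟨p0, p1, p2, -⟩ := hf.1
    obtain ⟨k, l, e⟩ := exists_reduce_eq (sigmaMiddle f) (by simp only [sigmaMiddle]; omega)
    rw [sigma_of_middle h h0 h2, e, sigma_of_middle] <;> simp only [sigmaMiddle] <;> try omega
    refine Eq.trans (reduce_congr ?_ ?_ ?_ ⟨0, ?_⟩ ⟨k, ?_⟩ ⟨2 + l, ?_⟩) (reduce_eq_self hf.2) <;>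
      ring
  obtain ⟨p0, p1, p2, -⟩ := hf.1
  have hq := hf.2.1
  rcases hf.sigma_cases with ⟨h, e⟩ | ⟨h, h0, h2, e⟩ | ⟨h, h0, h2, e⟩ | ⟨h, h0, h2, -⟩ |
    ⟨h, h0, h2, -⟩
  · rw [e, e]
  · obtain ⟨k, l, e'⟩ := exists_reduce_eq (sigmaShort f) (by simp only [sigmaShort]; omega)
    rw [e, e', sigma_of_long] <;> simp only [sigmaShort] <;> try omega
    refine Eq.trans (reduce_congr ?_ ?_ ?_ ⟨0, ?_⟩ ⟨1 + k, ?_⟩ ⟨1 + l, ?_⟩)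
      (reduce_eq_self hf.2) <;> simp only [sigmaLong] <;> ring
  · obtain ⟨k, l, e'⟩ := exists_reduce_eq (sigmaLong f) (by simp only [sigmaLong]; omega)
    rw [e, e', sigma_of_short] <;> simp only [sigmaLong] <;> try omega
    refine Eq.trans (reduce_congr ?_ ?_ ?_ ⟨0, ?_⟩ ⟨1 + k, ?_⟩ ⟨1 + l, ?_⟩)
      (reduce_eq_self hf.2) <;> simp only [sigmaShort] <;> ring
  · exact middle hf h h0 h2
  · have := middle (f := psi2 f) hf.psi2 h h2 h0
    rw [sigma_psi2 hf, sigma_psi2 hf.sigma] at this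
    exact congrArg psi2 this

theorem sigma_psi3 {f : Tuple} (hf : Good f) : sigma (psi3 f) = psi3 (sigma f) := by
  have key : ∀ {f : Tuple}, Good f → 0 < f.q0 → ∃ k l : ℤ, psi3 f = ⟨f.h0, f.h1, f.h2,
      f.h2 + f.h0 - f.q0, -f.q1 + (f.h0 + f.h1) * k, -f.q2 + (f.h1 + f.h2) * l⟩ :=
    fun {f} hf h => by
      obtain ⟨k, l, e⟩ := exists_reduce_eq ⟨f.h0, f.h1, f.h2, f.h2 + f.h0 - f.q0, -f.q1, -f.q2⟩
        (by have := hf.2.1; simp only; omega)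
      refine ⟨k, l, e ▸ ?_⟩
      exact reduce_congr (f := negTwist f) rfl rfl rfl ⟨-1, by simp only [negTwist]; ring⟩
        ⟨0, by simp only [negTwist]; ring⟩ ⟨0, by simp only [negTwist]; ring⟩
  have short : ∀ {f : Tuple}, Good f → 0 < f.q0 → f.q0 < f.h0 → f.q0 < f.h2 →
      sigma (psi3 f) = psi3 (sigma f) := fun {f} hf h h0 h2 => by
    obtain ⟨p0, p1, p2, -⟩ := hf.1
    obtain ⟨k, l, e⟩ := key hf h
    obtain ⟨m, n, e'⟩ := exists_reduce_eq (sigmaShort f) (by simp only [sigmaShort]; omega)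
    rw [sigma_of_short h h0 h2, e, e', sigma_of_long, psi3_eq_reduce] <;> (try simp only) <;> try omega
    refine reduce_congr ?_ ?_ ?_ ⟨1, ?_⟩ ⟨k + m + 1, ?_⟩ ⟨l + n + 1, ?_⟩ <;>
      simp only [sigmaLong, sigmaShort, negTwist] <;> ring
  have middle : ∀ {f : Tuple}, Good f → 0 < f.q0 → f.h0 < f.q0 → f.q0 < f.h2 →
      sigma (psi3 f) = psi3 (sigma f) := fun {f} hf h h0 h2 => by
    obtain ⟨p0, p1, p2, -⟩ := hf.1
    obtain ⟨k, l, e⟩ := key hf h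
    obtain ⟨m, n, e'⟩ := exists_reduce_eq (sigmaMiddle f) (by simp only [sigmaMiddle]; omega)
    rw [sigma_of_middle h h0 h2, e, e', sigma_of_middle, psi3_eq_reduce] <;> (try simp only) <;> try omega
    refine reduce_congr ?_ ?_ ?_ ⟨1, ?_⟩ ⟨k + m, ?_⟩ ⟨l + n + 2, ?_⟩ <;>
      simp only [sigmaMiddle, negTwist] <;> ring
  rcases hf.sigma_cases with ⟨h, e⟩ | ⟨h, h0, h2, -⟩ | ⟨h, h0, h2, -⟩ | ⟨h, h0, h2, -⟩ |
    ⟨h, h0, h2, -⟩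
  · rw [e, sigma_of_eq_zero]
    simp [psi3, h]
  · exact short hf h h0 h2
  · obtain ⟨k, l, e⟩ := key hf h
    have hq := hf.2.1
    have := short hf.psi3 (by rw [e]; simp only; omega) (by rw [e]; simp only; omega)
      (by rw [e]; simp only; omega)
    rw [psi3_psi3 hf.2] at this
    rw [this, psi3_psi3 hf.psi3.sigma.2]
  · exact middle hf h h0 h2
  · have := middle (f := psi2 f) hf.psi2 h h2 h0
    rw [psi3_psi2, sigma_psi2 hf.psi3, sigma_psi2 hf, psi3_psi2] at this
    exact congrArg psi2 this

/-! ### Closure of the set of admissible tuples -/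

theorem HasLabelling.sigma {n : ℕ} {f : Tuple} (hl : HasLabelling n f) (hf : Good f) :
    HasLabelling n (sigma f) := by
  have middle : ∀ {f : Tuple}, HasLabelling n f → Good f → 0 < f.q0 → f.h0 < f.q0 → f.q0 < f.h2 →
      HasLabelling n (GMN.sigma f) := fun {f} hl hf h h0 h2 => by
    rw [sigma_of_middle h h0 h2]
    refine (hl.of_arcs hf.1 hf.2.1 (parity_sigmaMiddle hf.1 h0 h2) ?_ _ _
      fun a b hab => hab.sigmaMiddle h0 h2).reduce
    have := hf.1
    simp only [Parity] at this
    simp only [sigmaMiddle]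
    omega
  have hp := hf.1
  have hq := hf.2.1
  simp only [Parity] at hp
  rcases hf.sigma_cases with ⟨h, e⟩ | ⟨h, h0, h2, e⟩ | ⟨h, h0, h2, e⟩ | ⟨h, h0, h2, e⟩ |
    ⟨h, h0, h2, e⟩
  · rwa [e]
  · rw [e]
    refine (hl.of_arcs hf.1 hf.2.1 (parity_sigmaShort hf.1 h h0 h2) ?_ _ _
      fun a b hab => hab.sigmaShort h0 h2).reduce
    simp only [sigmaShort]
    omega
  · rw [e]
    refine (hl.of_arcs hf.1 hf.2.1 (parity_sigmaLong hf.1 hf.2 h0 h2) ?_ _ _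
      fun a b hab => hab.sigmaLong h0 h2).reduce
    simp only [sigmaLong]
    omega
  · exact middle hl hf h h0 h2
  · have := (middle hl.psi2 hf.psi2 h h2 h0).psi2
    rwa [sigma_psi2 hf] at this

theorem Good.condI {f : Tuple} (hf : Good f) : CondI f :=
  forall_zmod_three.2 ⟨hf.1.1, hf.1.2.1, hf.1.2.2.1⟩

theorem admissible_iff_good {f : Tuple} :
    Admissible f ↔ Good f ∧ HasLabelling 3 f ∧ ¬ HasLabelling 4 f := by
  rw [admissible_iff, ← and_assoc]
  exact and_congr_right fun h => threeOrbits_iff (Good.condI h)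

theorem Admissible.good {f : Tuple} (hf : Admissible f) : Good f := (admissible_iff_good.1 hf).1

theorem Admissible.psi1 {f : Tuple} (hf : Admissible f) : Admissible (psi1 f) := by
  obtain ⟨hg, h3, h4⟩ := admissible_iff_good.1 hf
  exact admissible_iff_good.2 ⟨hg.psi1, h3.psi1, fun h => h4 h.psi1.psi1⟩

theorem Admissible.psi2 {f : Tuple} (hf : Admissible f) : Admissible (psi2 f) := by
  obtain ⟨hg, h3, h4⟩ := admissible_iff_good.1 hf
  exact admissible_iff_good.2 ⟨hg.psi2, h3.psi2, fun h => h4 h.psi2⟩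

theorem Admissible.psi3 {f : Tuple} (hf : Admissible f) : Admissible (psi3 f) := by
  obtain ⟨hg, h3, h4⟩ := admissible_iff_good.1 hf
  exact admissible_iff_good.2 ⟨hg.psi3, h3.psi3, fun h => h4 (psi3_psi3 hg.2 ▸ h.psi3)⟩

theorem Admissible.sigma {f : Tuple} (hf : Admissible f) : Admissible (sigma f) := by
  obtain ⟨hg, h3, h4⟩ := admissible_iff_good.1 hf
  exact admissible_iff_good.2
    ⟨hg.sigma, h3.sigma hg, fun h => h4 (sigma_sigma hg ▸ h.sigma hg.sigma)⟩

/-! ### The change of complexity -/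

theorem nu_psi1 (f : Tuple) : nu (psi1 f) = nu f := by
  simp only [nu, psi1]
  ring

theorem nu_psi2 (f : Tuple) : nu (psi2 f) = nu f := by
  simp only [nu, psi2]
  ring

theorem nu_psi3 (f : Tuple) : nu (psi3 f) = nu f := rfl

theorem Good.delta_psi2 {f : Tuple} (hf : Good f) : delta (GMN.psi2 f) = delta f := by
  rw [delta, sigma_psi2 hf, nu_psi2, nu_psi2, delta]

theorem Good.delta_psi3 {f : Tuple} (hf : Good f) : delta (GMN.psi3 f) = delta f := by
  rw [delta, sigma_psi3 hf, nu_psi3, nu_psi3, delta]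

theorem Good.delta_sigma {f : Tuple} (hf : Good f) : delta (GMN.sigma f) = -delta f := by
  rw [delta, sigma_sigma hf, delta, neg_sub]

theorem Good.delta_eq {f : Tuple} (hf : Good f) (h : f.q0 ≠ 0) :
    delta f = f.h1 - min (min f.q0 (f.h2 + f.h0 - f.q0)) (min f.h0 f.h2) := by
  have hq := hf.2.1
  rcases hf.sigma_cases with ⟨h', e⟩ | ⟨-, h0, h2, e⟩ | ⟨-, h0, h2, e⟩ | ⟨-, h0, h2, e⟩ |
    ⟨-, h0, h2, e⟩
  · exact (h h').elim
  all_goals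
    rw [delta, e]
    simp only [nu, GMN.reduce, sigmaShort, sigmaLong, sigmaMiddle, sigmaMiddle']
    omega

theorem delta_of_eq_zero {f : Tuple} (h : f.q0 = 0) : delta f = 0 := by
  rw [delta, sigma_of_eq_zero h, sub_self]

theorem Good.lt_of_delta_neg {f : Tuple} (hf : Good f) (h : delta f < 0) :
    f.h1 < f.h0 ∧ f.h1 < f.h2 := by
  have h' : f.q0 ≠ 0 := fun h' => by
    rw [delta_of_eq_zero h'] at h
    exact h.false
  rw [hf.delta_eq h'] at h
  omega

theorem Good.delta_nonneg {f : Tuple} (hf : Good f) (h : f.h0 ≤ f.h1 ∨ f.h2 ≤ f.h1) :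
    0 ≤ delta f := by
  by_contra! h'
  have := hf.lt_of_delta_neg h'
  omega

theorem Good.delta_pos {f : Tuple} (hf : Good f) (h : f.h0 < f.h1 ∨ f.h2 < f.h1) (hq : f.q0 ≠ 0) :
    0 < delta f := by
  rw [hf.delta_eq hq]
  omega

/-- A property of the three cyclic rotations of a tuple. -/
def AllRot (P : Tuple → Prop) (f : Tuple) : Prop := P f ∧ P (psi1 f) ∧ P (psi1 (psi1 f))

theorem AllRot.psi1 {P : Tuple → Prop} {f : Tuple} (h : AllRot P f) : AllRot P (psi1 f) :=
  ⟨h.2.1, h.2.2, h.1⟩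

theorem Good.plateau {f : Tuple} (hf : Good f) (h : delta f = 0) (hq : f.q0 ≠ 0) :
    AllRot (fun g => 0 ≤ delta g) f := by
  have hp := hf.1
  have key : (f.h0 = f.h1 ∧ f.h1 ≤ f.h2) ∨ (f.h2 = f.h1 ∧ f.h1 ≤ f.h0) := by
    rw [hf.delta_eq hq] at h
    have hq' := hf.2.1
    obtain ⟨-, -, -, p1, p2, p3, -⟩ := hp
    have : f.q0 ≠ f.h1 := fun e => by omega
    have : f.h2 + f.h0 - f.q0 ≠ f.h1 := fun e => by omega
    omega
  refine ⟨h.ge, hf.psi1.delta_nonneg ?_, hf.psi1.psi1.delta_nonneg ?_⟩ <;>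
    simp only [GMN.psi1] <;> omega

theorem AllRot.psi2 {P : Tuple → Prop} (hP : ∀ g, Admissible g → P g → P (psi2 g)) {f : Tuple}
    (hf : Admissible f) (h : AllRot P f) : AllRot P (psi2 f) :=
  ⟨hP _ hf h.1, hP _ hf.psi1.psi1 h.2.2, hP _ hf.psi1 h.2.1⟩

theorem AllRot.psi3 {P : Tuple → Prop} (hP : ∀ g, Admissible g → P g → P (psi3 g)) {f : Tuple}
    (hf : Admissible f) (h : AllRot P f) : AllRot P (psi3 f) :=
  ⟨hP _ hf h.1, hP _ hf.psi1 h.2.1, hP _ hf.psi1.psi1 h.2.2⟩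

/-! ### Orbits of `H` and `G` -/

theorem HEquiv.psi1 {f g : Tuple} (h : HEquiv f g) (hg : Admissible g) : HEquiv f (psi1 g) :=
  h.trans _ _ _ (.rel _ _ ⟨hg, hg.psi1, .inl rfl⟩)

theorem HEquiv.psi2 {f g : Tuple} (h : HEquiv f g) (hg : Admissible g) : HEquiv f (psi2 g) :=
  h.trans _ _ _ (.rel _ _ ⟨hg, hg.psi2, .inr (.inl rfl)⟩)

theorem HEquiv.psi3 {f g : Tuple} (h : HEquiv f g) (hg : Admissible g) : HEquiv f (psi3 g) :=
  h.trans _ _ _ (.rel _ _ ⟨hg, hg.psi3, .inr (.inr rfl)⟩)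

theorem GEquiv.psi1 {f g : Tuple} (h : GEquiv f g) (hg : Admissible g) : GEquiv f (psi1 g) :=
  h.trans _ _ _ (.rel _ _ ⟨hg, hg.psi1, .inl rfl⟩)

theorem GEquiv.sigma {f g : Tuple} (h : GEquiv f g) (hg : Admissible g) : GEquiv f (sigma g) :=
  h.trans _ _ _ (.rel _ _ ⟨hg, hg.sigma, .inr (.inr (.inr rfl))⟩)

theorem HEquiv.iff_of_closed {Q : Tuple → Prop} (h1 : ∀ f, Admissible f → Q f → Q (GMN.psi1 f))
    (h2 : ∀ f, Admissible f → Q f → Q (GMN.psi2 f))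
    (h3 : ∀ f, Admissible f → Q f → Q (GMN.psi3 f)) {f g : Tuple} (h : HEquiv f g) :
    Q f ↔ Q g := by
  induction h with
  | rel a b h =>
    obtain ⟨ha, hb, rfl | rfl | rfl⟩ := h
    · exact ⟨h1 a ha, fun h => h1 _ hb.psi1 (h1 _ hb h)⟩
    · exact ⟨h2 a ha, h2 _ hb⟩
    · exact ⟨h3 a ha, fun h => psi3_psi3 ha.good.2 ▸ h3 _ hb h⟩
  | refl => rfl
  | symm _ _ _ h => exact h.symm
  | trans _ _ _ _ _ h h' => exact h.trans h'

theorem GEquiv.iff_of_closed {Q : Tuple → Prop} (h1 : ∀ f, Admissible f → Q f → Q (GMN.psi1 f))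
    (h2 : ∀ f, Admissible f → Q f → Q (psi2 f)) (h3 : ∀ f, Admissible f → Q f → Q (psi3 f))
    (h4 : ∀ f, Admissible f → Q f → Q (GMN.sigma f)) {f g : Tuple} (h : GEquiv f g) :
    Q f ↔ Q g := by
  induction h with
  | rel a b h =>
    obtain ⟨ha, hb, rfl | rfl | rfl | rfl⟩ := h
    · exact ⟨h1 a ha, fun h => h1 _ hb.psi1 (h1 _ hb h)⟩
    · exact ⟨h2 a ha, h2 _ hb⟩
    · exact ⟨h3 a ha, fun h => psi3_psi3 ha.good.2 ▸ h3 _ hb h⟩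
    · exact ⟨h4 a ha, fun h => sigma_sigma ha.good ▸ h4 _ hb h⟩
  | refl => rfl
  | symm _ _ _ h => exact h.symm
  | trans _ _ _ _ _ h h' => exact h.trans h'

theorem HEquiv.nu_eq {f g : Tuple} (h : HEquiv f g) : nu f = nu g :=
  (h.iff_of_closed (Q := fun g => nu f = nu g) (fun g _ e => e.trans (nu_psi1 g).symm)
    (fun g _ e => e.trans (nu_psi2 g).symm) (fun _ _ e => e)).1 rfl

/-- The tuples obtained from `f` by means of `ψ₁`, `ψ₂`, `ψ₃` and the steps `σ` that preserve the
complexity. -/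
inductive Level (f : Tuple) : Tuple → Prop
  | base : Level f f
  | psi1 {g : Tuple} : Level f g → Level f (psi1 g)
  | psi2 {g : Tuple} : Level f g → Level f (psi2 g)
  | psi3 {g : Tuple} : Level f g → Level f (psi3 g)
  | sigma {g : Tuple} : Level f g → delta g = 0 → Level f (sigma g)

/-- The tuples obtained from the level of `f` by means of steps `σ` that increase the complexity
and of rotations. -/
inductive Tower (f : Tuple) : Tuple → Prop
  | level {g : Tuple} : Level f g → Tower f g
  | up {g k : Tuple} : Tower f g → 0 < delta g →
      k = sigma g ∨ k = psi1 (sigma g) ∨ k = psi1 (psi1 (sigma g)) → Tower f k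

section
variable {f g : Tuple}

theorem Level.admissible (h : Level f g) (hf : Admissible f) : Admissible g := by
  induction h with
  | base => exact hf
  | psi1 _ h => exact h.psi1
  | psi2 _ h => exact h.psi2
  | psi3 _ h => exact h.psi3
  | sigma _ _ h => exact h.sigma

theorem Level.nu_eq (h : Level f g) : nu g = nu f := by
  induction h with
  | base => rfl
  | psi1 _ h => rwa [nu_psi1]
  | psi2 _ h => rwa [nu_psi2]
  | psi3 _ h => rwa [nu_psi3]
  | sigma _ h' h => rwa [← sub_eq_zero.1 h'] at h

theorem Level.allRot_delta_nonneg (h : Level f g) (hf : Admissible f)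
    (h0 : AllRot (fun g => 0 ≤ delta g) f) : AllRot (fun g => 0 ≤ delta g) g := by
  induction h with
  | base => exact h0
  | psi1 _ h => exact h.psi1
  | psi2 hl h => exact h.psi2 (fun g hg => hg.good.delta_psi2.ge.trans') (hl.admissible hf)
  | psi3 hl h => exact h.psi3 (fun g hg => hg.good.delta_psi3.ge.trans') (hl.admissible hf)
  | @sigma g hl h' h =>
    have hg := (hl.admissible hf).good
    by_cases hq : (GMN.sigma g).q0 = 0
    · rwa [← sigma_sigma hg, sigma_of_eq_zero hq] at h
    · exact hg.sigma.plateau (by rw [hg.delta_sigma, h', neg_zero]) hq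

theorem Tower.admissible (h : Tower f g) (hf : Admissible f) : Admissible g := by
  induction h with
  | level h => exact h.admissible hf
  | up _ _ h' h =>
    rcases h' with rfl | rfl | rfl
    exacts [h.sigma, h.sigma.psi1, h.sigma.psi1.psi1]

theorem Tower.psi1 (h : Tower f g) : Tower f (psi1 g) := by
  cases h with
  | level h => exact .level h.psi1
  | up h h' h'' =>
    rcases h'' with rfl | rfl | rfl
    exacts [.up h h' (.inr (.inl rfl)), .up h h' (.inr (.inr rfl)), .up h h' (.inl rfl)]

theorem Tower.psi2 (h : Tower f g) (hf : Admissible f) : Tower f (psi2 g) := by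
  induction h with
  | level h => exact .level h.psi2
  | up h h' h'' ih =>
    have hg := (h.admissible hf).good
    refine .up ih (hg.delta_psi2 ▸ h') ?_
    rw [sigma_psi2 hg]
    rcases h'' with rfl | rfl | rfl
    exacts [.inl rfl, .inr (.inr rfl), .inr (.inl rfl)]

theorem Tower.psi3 (h : Tower f g) (hf : Admissible f) : Tower f (psi3 g) := by
  induction h with
  | level h => exact .level h.psi3
  | up h h' h'' ih =>
    have hg := (h.admissible hf).good
    refine .up ih (hg.delta_psi3 ▸ h') ?_
    rw [sigma_psi3 hg]
    rcases h'' with rfl | rfl | rfl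
    exacts [.inl rfl, .inr (.inl rfl), .inr (.inr rfl)]

theorem Tower.sigma_of_lt (h : Tower f g) (hg : Good g) (h' : g.h0 < g.h1 ∨ g.h2 < g.h1) :
    Tower f (sigma g) := by
  by_cases hq : g.q0 = 0
  · rwa [sigma_of_eq_zero hq]
  · exact .up h (hg.delta_pos h' hq) (.inl rfl)

theorem Tower.sigma (h : Tower f g) (hf : Admissible f)
    (h0 : AllRot (fun g => 0 ≤ delta g) f) : Tower f (sigma g) := by
  have ht := h
  cases h with
  | level h =>
    rcases (h.allRot_delta_nonneg hf h0).1.eq_or_lt' with h' | h'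
    · exact .level (h.sigma h')
    · exact .up ht h' (.inl rfl)
  | @up g _ h h' h'' =>
    have hg := (h.admissible hf).good
    have hlt := hg.sigma.lt_of_delta_neg (by rw [hg.delta_sigma]; omega)
    rcases h'' with rfl | rfl | rfl
    · rwa [sigma_sigma hg]
    · exact ht.sigma_of_lt hg.sigma.psi1 (.inl hlt.2)
    · exact ht.sigma_of_lt hg.sigma.psi1.psi1 (.inr hlt.1)

theorem Tower.level_or_lt (h : Tower f g) : Level f g ∨ nu f < nu g := by
  induction h with
  | level h => exact .inl h
  | @up g k h h' h'' ih =>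
    have hg : nu f ≤ nu g := ih.elim (fun h => h.nu_eq.ge) le_of_lt
    have hk : nu k = nu (GMN.sigma g) := by
      rcases h'' with rfl | rfl | rfl <;> simp only [nu_psi1]
    rw [delta] at h'
    exact .inr (by omega)

theorem GEquiv.level_or_lt (h : GEquiv f g) (hf : Admissible f)
    (h0 : AllRot (fun g => 0 ≤ delta g) f) : Level f g ∨ nu f < nu g :=
  ((h.iff_of_closed (Q := Tower f) (fun _ _ h => h.psi1) (fun _ _ h => h.psi2 hf)
    (fun _ _ h => h.psi3 hf) (fun _ _ h => h.sigma hf h0)).1 (.level .base)).level_or_lt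

theorem Level.hEquiv (h : Level f g) (hf : Admissible f)
    (h0 : AllRot (fun g => HEquiv f (GMN.sigma g) ∨ 0 < delta g) f) : HEquiv f g := by
  induction h with
  | base => exact .refl _
  | psi1 hl h => exact h.psi1 (hl.admissible hf)
  | psi2 hl h => exact h.psi2 (hl.admissible hf)
  | psi3 hl h => exact h.psi3 (hl.admissible hf)
  | sigma hl hd h =>
    refine (((h.iff_of_closed (Q := AllRot _) (fun k _ => AllRot.psi1)
      (fun k hk => AllRot.psi2 ?_ hk) (fun k hk => AllRot.psi3 ?_ hk)).1 h0).1).resolve_right hd.not_gt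
    · intro k hk
      rw [sigma_psi2 hk.good, hk.good.delta_psi2]
      exact Or.imp_left fun h => h.psi2 hk.sigma
    · intro k hk
      rw [sigma_psi3 hk.good, hk.good.delta_psi3]
      exact Or.imp_left fun h => h.psi3 hk.sigma

end

theorem forall_iterate_psi1 (P : Tuple → Prop) (f : Tuple) :
    (∀ i : Fin 3, P (psi1^[i.val] f)) ↔ AllRot P f := by
  simp only [Fin.forall_fin_succ, AllRot]
  simp
/-- a canonical 6-tuple `f` is minimal iff `δ(ψ₁^i(f)) ≥ 0` for
`i = 0, 1, 2`, and is a root iff `δ(ψ₁^i(f)) > 0` whenever `σ(ψ₁^i(f))` is not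
`H`-equivalent to `f`. -/
theorem stmt_17 (f : Tuple) (hf : Canonical f) :
    (Minimal f ↔ ∀ i : Fin 3, 0 ≤ delta (psi1^[i.val] f)) ∧
    (Root f ↔ ∀ i : Fin 3, ¬ HEquiv f (sigma (psi1^[i.val] f)) →
      0 < delta (psi1^[i.val] f)) := by
  have hf' := hf.1
  have hr : AllRot (GEquiv f) f :=
    ⟨.refl _, GEquiv.psi1 (.refl _) hf', GEquiv.psi1 (GEquiv.psi1 (.refl _) hf') hf'.psi1⟩
  have ha : AllRot Admissible f := ⟨hf', hf'.psi1, hf'.psi1.psi1⟩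
  have hn : AllRot (fun g => nu g = nu f) f := ⟨rfl, nu_psi1 _, (nu_psi1 _).trans (nu_psi1 _)⟩
  have hr := (forall_iterate_psi1 _ f).2 hr
  have ha := (forall_iterate_psi1 _ f).2 ha
  have hn := (forall_iterate_psi1 _ f).2 hn
  refine ⟨⟨fun h i => ?_, fun h => ⟨hf, fun g hg => ?_⟩⟩,
    ⟨fun h i hi => ?_, fun h => ⟨hf, fun g hg hg' => ?_⟩⟩⟩
  · have := h.2 _ ((hr i).sigma (ha i))
    rw [delta, hn i]
    omega
  · rcases hg.level_or_lt hf' ((forall_iterate_psi1 (fun g => 0 ≤ delta g) f).1 h) with h' | h'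
    exacts [h'.nu_eq.ge, h'.le]
  · have := h.2 _ ((hr i).sigma (ha i)) hi
    rw [delta, hn i]
    omega
  · have h0 : ∀ i : Fin 3, HEquiv f (sigma (psi1^[i.val] f)) ∨ 0 < delta (psi1^[i.val] f) :=
      fun i => or_iff_not_imp_left.2 (h i)
    have h1 : ∀ i : Fin 3, 0 ≤ delta (psi1^[i.val] f) := fun i => by
      rcases h0 i with h' | h'
      · rw [delta, hn i, h'.nu_eq, sub_self]
      · exact h'.le
    refine (hg.level_or_lt hf' ((forall_iterate_psi1 (fun g => 0 ≤ delta g) f).1 h1)).resolve_left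
      fun h' => hg' ?_
    exact h'.hEquiv hf' ((forall_iterate_psi1 (fun g => HEquiv f (sigma g) ∨ 0 < delta g) f).1 h0)

end GMN
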